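/- For all n ≥ 0 and all I, J ∈ P_n: the (I,J) entry of BM_n is nonzero if and only if J ⊆ I and fin(J) = fin(I), where fin(I) := max{0 ≤ i ≤ n : i ∉ I}. In particular, BM_n is lower triangular with respect to the anti-lexicographic order on P_n. -/

import Mathlib

/-!
Split subsets of `Fin (n + 1)` according to whether they contain the top element. Then `M_{n+1}`
has the block form `[[M, -M], [0, M]]`, and multiplying blocks gives

* `A_{n+1} M_{n+1} = [[AM, 0], [AM, -(AM + BM)]]`,
* `B_{n+1} M_{n+1} = [[AM, 0], [0, -BM]]`,

with `AM = A_n M_n` and `BM = B_n M_n`. The only possible cancellation is in `AM + BM`, and it does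
not occur: by induction every nonzero entry in column `J` of either product has sign `(-1)^|J|`.
Hence, simultaneously for both products (`signed_pattern`), the entry of `AM` at `(I, J)` is nonzero
exactly when `J ⊆ I`, and that of `BM` exactly when moreover `fin J = fin I`. The recursion for
`fin` matches the block form of `BM`: `fin I = n + 1` if `n + 1 ∉ I`, and otherwise `fin I` is the
`fin` of the restriction of `I` to `[n]`.
-/

open Finset

/-- Restriction of a subset of `Fin (n+1)` to `Fin n` (forgetting the top element). -/
def resSet {n : ℕ} (I : Finset (Fin (n + 1))) : Finset (Fin n) :=
  Finset.univ.filter (fun j : Fin n => Fin.castSucc j ∈ I)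

mutual
  /-- The matrix `A_n`, rows/columns indexed by subsets of `{1,…,n}` (element `j`
  of `[n]` corresponds to `j-1 : Fin n`, i.e. anti-lexicographic/binary order). -/
  def Amat : (n : ℕ) → Matrix (Finset (Fin n)) (Finset (Fin n)) ℤ
    | 0 => Matrix.of fun _ _ => 1
    | n + 1 => Matrix.of fun I J =>
        if Fin.last n ∈ I then
          if Fin.last n ∈ J then - Bmat n (resSet I) (resSet J)
          else Amat n (resSet I) (resSet J)
        else Amat n (resSet I) (resSet J)
  /-- The matrix `B_n`. -/
  def Bmat : (n : ℕ) → Matrix (Finset (Fin n)) (Finset (Fin n)) ℤ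
    | 0 => Matrix.of fun _ _ => 1
    | n + 1 => Matrix.of fun I J =>
        if Fin.last n ∈ I then
          if Fin.last n ∈ J then - Bmat n (resSet I) (resSet J)
          else 0
        else Amat n (resSet I) (resSet J)
end

/-- The Walsh-Hadamard matrix `H_n`. -/
def Hmat : (n : ℕ) → Matrix (Finset (Fin n)) (Finset (Fin n)) ℤ
  | 0 => Matrix.of fun _ _ => 1
  | n + 1 => Matrix.of fun I J =>
      if Fin.last n ∈ I ∧ Fin.last n ∈ J then - Hmat n (resSet I) (resSet J)
      else Hmat n (resSet I) (resSet J)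

/-- The Möbius matrix `M_n` of the boolean lattice. -/
def Mobmat (n : ℕ) : Matrix (Finset (Fin n)) (Finset (Fin n)) ℤ :=
  Matrix.of fun I J => if I ⊆ J then (-1) ^ (J \ I).card else 0

/-- The zeta matrix `Z_n` of the boolean lattice. -/
def Zetamat (n : ℕ) : Matrix (Finset (Fin n)) (Finset (Fin n)) ℤ :=
  Matrix.of fun I J => if I ⊆ J then 1 else 0

/-- The subset of `[n] = {1,…,n}` corresponding to a subset of `Fin n`. -/
def natSet {n : ℕ} (I : Finset (Fin n)) : Finset ℕ := Finset.image (fun j : Fin n => (j : ℕ) + 1) I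

/-- The ordinal number of a subset in the anti-lexicographic order. -/
def ordFin {n : ℕ} (I : Finset (Fin n)) : ℕ := ∑ j ∈ I, 2 ^ (j : ℕ)

/-- The run (maximal interval of consecutive integers) of `I` containing `j`
(empty if `j ∉ I`). -/
def runOf (I : Finset ℕ) (j : ℕ) : Finset ℕ :=
  I.filter (fun i => ∀ k ∈ Finset.Icc (min i j) (max i j), k ∈ I)

/-- The set of runs (maximal intervals of consecutive integers) of `I`. -/
def runsOf (I : Finset ℕ) : Finset (Finset ℕ) := I.image (runOf I)

/-- `P` is a prefix of the interval `R`: it consists of an initial segment of `R`. -/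
def IsPrefixOf (P R : Finset ℕ) : Prop :=
  P ⊆ R ∧ ∀ i ∈ R, ∀ j ∈ P, i ≤ j → i ∈ P


/-- `fin(I) = max {0 ≤ i ≤ n : i ∉ I}` for a subset `I` of `[n] = {1,…,n}`. -/
def finOf (n : ℕ) (I : Finset ℕ) : ℕ :=
  (((Finset.range (n + 1)).filter (fun i => i ∉ I)).max).getD 0

/-! ### Subsets with and without the top element -/

/-- A subset of `Fin n` viewed as a subset of `Fin (n + 1)` without the top element. -/
def loSet {n : ℕ} (K : Finset (Fin n)) : Finset (Fin (n + 1)) := K.map Fin.castSuccEmb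

/-- A subset of `Fin n` with the top element of `Fin (n + 1)` adjoined. -/
def hiSet {n : ℕ} (K : Finset (Fin n)) : Finset (Fin (n + 1)) := insert (Fin.last n) (loSet K)

lemma last_notMem_loSet {n : ℕ} (K : Finset (Fin n)) : Fin.last n ∉ loSet K := by
  simp [loSet, Fin.castSucc_ne_last]

lemma last_mem_hiSet {n : ℕ} (K : Finset (Fin n)) : Fin.last n ∈ hiSet K := by
  simp [hiSet]

lemma castSucc_mem_loSet {n : ℕ} (K : Finset (Fin n)) (j : Fin n) :
    j.castSucc ∈ loSet K ↔ j ∈ K := by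
  simp [loSet]

lemma castSucc_mem_hiSet {n : ℕ} (K : Finset (Fin n)) (j : Fin n) :
    j.castSucc ∈ hiSet K ↔ j ∈ K := by
  simp [hiSet, castSucc_mem_loSet, Fin.castSucc_ne_last]

lemma resSet_loSet {n : ℕ} (K : Finset (Fin n)) : resSet (loSet K) = K := by
  ext j; simp [resSet, castSucc_mem_loSet]

lemma resSet_hiSet {n : ℕ} (K : Finset (Fin n)) : resSet (hiSet K) = K := by
  ext j; simp [resSet, castSucc_mem_hiSet]

lemma loSet_resSet {n : ℕ} {I : Finset (Fin (n + 1))} (h : Fin.last n ∉ I) :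
    loSet (resSet I) = I := by
  ext j
  induction j using Fin.lastCases with
  | last => simp [last_notMem_loSet, h]
  | cast j => simp [castSucc_mem_loSet, resSet]

lemma hiSet_resSet {n : ℕ} {I : Finset (Fin (n + 1))} (h : Fin.last n ∈ I) :
    hiSet (resSet I) = I := by
  ext j
  induction j using Fin.lastCases with
  | last => simp [last_mem_hiSet, h]
  | cast j => simp [castSucc_mem_hiSet, resSet]

lemma eq_loSet_or_hiSet {n : ℕ} (I : Finset (Fin (n + 1))) :
    (∃ K, I = loSet K) ∨ ∃ K, I = hiSet K := by
  by_cases h : Fin.last n ∈ I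
  · exact Or.inr ⟨_, (hiSet_resSet h).symm⟩
  · exact Or.inl ⟨_, (loSet_resSet h).symm⟩

lemma sum_eq_lo_add_hi {n : ℕ} (f : Finset (Fin (n + 1)) → ℤ) :
    ∑ K, f K = ∑ K, f (loSet K) + ∑ K, f (hiSet K) := by
  rw [← Finset.sum_filter_not_add_sum_filter univ (fun K => Fin.last n ∈ K)]
  congr 1
  · refine (Finset.sum_bij' (fun K _ => loSet K) (fun K _ => resSet K) ?_ ?_ ?_ ?_ ?_).symm <;>
      simp +contextual [last_notMem_loSet, resSet_loSet, loSet_resSet]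
  · refine (Finset.sum_bij' (fun K _ => hiSet K) (fun K _ => resSet K) ?_ ?_ ?_ ?_ ?_).symm <;>
      simp +contextual [last_mem_hiSet, resSet_hiSet, hiSet_resSet]

lemma loSet_subset_loSet {n : ℕ} (I J : Finset (Fin n)) : loSet I ⊆ loSet J ↔ I ⊆ J :=
  Finset.map_subset_map

lemma loSet_subset_hiSet {n : ℕ} (I J : Finset (Fin n)) : loSet I ⊆ hiSet J ↔ I ⊆ J := by
  rw [hiSet, Finset.subset_insert_iff_of_notMem (last_notMem_loSet I), loSet_subset_loSet]

lemma hiSet_subset_hiSet {n : ℕ} (I J : Finset (Fin n)) : hiSet I ⊆ hiSet J ↔ I ⊆ J := by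
  rw [hiSet, hiSet, Finset.insert_subset_insert_iff (last_notMem_loSet I), loSet_subset_loSet]

lemma not_hiSet_subset_loSet {n : ℕ} (I J : Finset (Fin n)) : ¬ hiSet I ⊆ loSet J :=
  fun h => last_notMem_loSet J (h (last_mem_hiSet I))

lemma card_hiSet {n : ℕ} (K : Finset (Fin n)) : (hiSet K).card = K.card + 1 := by
  rw [hiSet, Finset.card_insert_of_notMem (last_notMem_loSet K), loSet, Finset.card_map]

lemma card_loSet {n : ℕ} (K : Finset (Fin n)) : (loSet K).card = K.card := by
  rw [loSet, Finset.card_map]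

/-! ### Block recursions for the matrix products -/

lemma Mobmat_lo_lo {n : ℕ} (I J : Finset (Fin n)) :
    Mobmat (n + 1) (loSet I) (loSet J) = Mobmat n I J := by
  simp only [Mobmat, Matrix.of_apply, loSet_subset_loSet]
  split_ifs with h
  · rw [Finset.card_sdiff_of_subset h, Finset.card_sdiff_of_subset ((loSet_subset_loSet I J).2 h),
      card_loSet, card_loSet]
  · rfl

lemma Mobmat_lo_hi {n : ℕ} (I J : Finset (Fin n)) :
    Mobmat (n + 1) (loSet I) (hiSet J) = - Mobmat n I J := by
  simp only [Mobmat, Matrix.of_apply, loSet_subset_hiSet]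
  split_ifs with h
  · rw [Finset.card_sdiff_of_subset h, Finset.card_sdiff_of_subset ((loSet_subset_hiSet I J).2 h),
      card_loSet, card_hiSet, Nat.succ_sub (Finset.card_le_card h), pow_succ]
    ring
  · simp

lemma Mobmat_hi_lo {n : ℕ} (I J : Finset (Fin n)) :
    Mobmat (n + 1) (hiSet I) (loSet J) = 0 := by
  simp [Mobmat, not_hiSet_subset_loSet]

lemma Mobmat_hi_hi {n : ℕ} (I J : Finset (Fin n)) :
    Mobmat (n + 1) (hiSet I) (hiSet J) = Mobmat n I J := by
  simp only [Mobmat, Matrix.of_apply, hiSet_subset_hiSet]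
  split_ifs with h
  · rw [Finset.card_sdiff_of_subset h, Finset.card_sdiff_of_subset ((hiSet_subset_hiSet I J).2 h),
      card_hiSet, card_hiSet, Nat.add_sub_add_right]
  · rfl

/-- Right multiplication by `M_{n+1}` in block form, lower column block. -/
lemma mul_Mobmat_lo {n : ℕ} (X : Matrix (Finset (Fin (n + 1))) (Finset (Fin (n + 1))) ℤ)
    (I : Finset (Fin (n + 1))) (J : Finset (Fin n)) :
    (X * Mobmat (n + 1)) I (loSet J) = ∑ K, X I (loSet K) * Mobmat n K J := by
  simp [Matrix.mul_apply, sum_eq_lo_add_hi, Mobmat_lo_lo, Mobmat_hi_lo]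

/-- Right multiplication by `M_{n+1}` in block form, upper column block. -/
lemma mul_Mobmat_hi {n : ℕ} (X : Matrix (Finset (Fin (n + 1))) (Finset (Fin (n + 1))) ℤ)
    (I : Finset (Fin (n + 1))) (J : Finset (Fin n)) :
    (X * Mobmat (n + 1)) I (hiSet J) =
      -∑ K, X I (loSet K) * Mobmat n K J + ∑ K, X I (hiSet K) * Mobmat n K J := by
  simp [Matrix.mul_apply, sum_eq_lo_add_hi, Mobmat_lo_hi, Mobmat_hi_hi]

lemma AM_lo_lo {n : ℕ} (I J : Finset (Fin n)) :
    (Amat (n + 1) * Mobmat (n + 1)) (loSet I) (loSet J) = (Amat n * Mobmat n) I J := by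
  rw [mul_Mobmat_lo, Matrix.mul_apply]
  simp [Amat, last_notMem_loSet, resSet_loSet]

lemma AM_lo_hi {n : ℕ} (I J : Finset (Fin n)) :
    (Amat (n + 1) * Mobmat (n + 1)) (loSet I) (hiSet J) = 0 := by
  simp [mul_Mobmat_hi, Amat, last_notMem_loSet, resSet_loSet, resSet_hiSet]

lemma AM_hi_lo {n : ℕ} (I J : Finset (Fin n)) :
    (Amat (n + 1) * Mobmat (n + 1)) (hiSet I) (loSet J) = (Amat n * Mobmat n) I J := by
  rw [mul_Mobmat_lo, Matrix.mul_apply]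
  simp [Amat, last_notMem_loSet, last_mem_hiSet, resSet_loSet, resSet_hiSet]

lemma AM_hi_hi {n : ℕ} (I J : Finset (Fin n)) :
    (Amat (n + 1) * Mobmat (n + 1)) (hiSet I) (hiSet J) =
      -((Amat n * Mobmat n) I J + (Bmat n * Mobmat n) I J) := by
  rw [mul_Mobmat_hi, Matrix.mul_apply, Matrix.mul_apply]
  simp [Amat, last_notMem_loSet, last_mem_hiSet, resSet_loSet, resSet_hiSet]
  ring

lemma BM_lo_lo {n : ℕ} (I J : Finset (Fin n)) :
    (Bmat (n + 1) * Mobmat (n + 1)) (loSet I) (loSet J) = (Amat n * Mobmat n) I J := by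
  rw [mul_Mobmat_lo, Matrix.mul_apply]
  simp [Bmat, last_notMem_loSet, resSet_loSet]

lemma BM_lo_hi {n : ℕ} (I J : Finset (Fin n)) :
    (Bmat (n + 1) * Mobmat (n + 1)) (loSet I) (hiSet J) = 0 := by
  simp [mul_Mobmat_hi, Bmat, last_notMem_loSet, resSet_loSet, resSet_hiSet]

lemma BM_hi_lo {n : ℕ} (I J : Finset (Fin n)) :
    (Bmat (n + 1) * Mobmat (n + 1)) (hiSet I) (loSet J) = 0 := by
  simp [mul_Mobmat_lo, Bmat, last_notMem_loSet, last_mem_hiSet]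

lemma BM_hi_hi {n : ℕ} (I J : Finset (Fin n)) :
    (Bmat (n + 1) * Mobmat (n + 1)) (hiSet I) (hiSet J) = -(Bmat n * Mobmat n) I J := by
  rw [mul_Mobmat_hi, Matrix.mul_apply]
  simp [Bmat, last_notMem_loSet, last_mem_hiSet, resSet_hiSet]

/-! ### Recursion for `fin` -/

lemma natSet_loSet {n : ℕ} (K : Finset (Fin n)) : natSet (loSet K) = natSet K := by
  simp [natSet, loSet, Finset.map_eq_image, Finset.image_image, Function.comp_def]

lemma natSet_hiSet {n : ℕ} (K : Finset (Fin n)) : natSet (hiSet K) = insert (n + 1) (natSet K) := by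
  rw [← natSet_loSet K, natSet, hiSet, Finset.image_insert, natSet, Fin.val_last]

lemma succ_notMem_natSet {n : ℕ} (K : Finset (Fin n)) : n + 1 ∉ natSet K := by
  simp only [natSet, Finset.mem_image, not_exists, not_and]
  intro j _
  have := j.isLt
  omega

lemma finOf_le (n : ℕ) (S : Finset ℕ) : finOf n S ≤ n := by
  unfold finOf
  rcases h : ((Finset.range (n + 1)).filter (fun i => i ∉ S)).max with _ | m
  · exact Nat.zero_le _
  · have := Finset.mem_of_max h
    simp only [Finset.mem_filter, Finset.mem_range] at this
    exact Nat.lt_succ_iff.1 this.1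

lemma finOf_loSet {n : ℕ} (K : Finset (Fin n)) : finOf (n + 1) (natSet (loSet K)) = n + 1 := by
  rw [natSet_loSet]
  refine le_antisymm (finOf_le _ _) ?_
  have hm : n + 1 ∈ (Finset.range (n + 1 + 1)).filter (fun i => i ∉ natSet K) := by
    simp [succ_notMem_natSet]
  unfold finOf
  obtain ⟨m, h⟩ := Finset.max_of_mem hm
  rw [h]
  exact Finset.le_max_of_eq hm h

lemma finOf_hiSet {n : ℕ} (K : Finset (Fin n)) :
    finOf (n + 1) (natSet (hiSet K)) = finOf n (natSet K) := by
  rw [natSet_hiSet]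
  unfold finOf
  congr 2
  ext i
  simp only [Finset.mem_filter, Finset.mem_range, Finset.mem_insert]
  constructor
  · rintro ⟨h, hi⟩
    push Not at hi
    exact ⟨by omega, hi.2⟩
  · rintro ⟨h, hi⟩
    refine ⟨by omega, ?_⟩
    rintro (hj | hj)
    · omega
    · exact hi hj

/-! ### Signs and supports -/

/-- After multiplying column `J` by `(-1)^|J|`, the entries of `A_n M_n` and `B_n M_n` are positive
on the claimed supports and vanish elsewhere. The common sign is what rules out cancellation in
the recursion. -/
lemma signed_pattern (n : ℕ) : ∀ I J : Finset (Fin n),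
    (J ⊆ I → 0 < (-1) ^ J.card * (Amat n * Mobmat n) I J) ∧
    (¬ J ⊆ I → (Amat n * Mobmat n) I J = 0) ∧
    (J ⊆ I ∧ finOf n (natSet J) = finOf n (natSet I) →
      0 < (-1) ^ J.card * (Bmat n * Mobmat n) I J) ∧
    (¬ (J ⊆ I ∧ finOf n (natSet J) = finOf n (natSet I)) → (Bmat n * Mobmat n) I J = 0) := by
  induction n with
  | zero =>
    intro I J
    obtain rfl : I = ∅ := Subsingleton.elim _ _
    obtain rfl : J = ∅ := Subsingleton.elim _ _
    simp [Matrix.mul_apply, Amat, Bmat, Mobmat]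
  | succ n ih =>
    intro I J
    rcases eq_loSet_or_hiSet I with ⟨I, rfl⟩ | ⟨I, rfl⟩ <;>
      rcases eq_loSet_or_hiSet J with ⟨J, rfl⟩ | ⟨J, rfl⟩ <;>
      obtain ⟨h1, h2, h3, h4⟩ := ih I J
    · simp only [loSet_subset_loSet, card_loSet, finOf_loSet, AM_lo_lo, BM_lo_lo, and_true]
      exact ⟨h1, h2, h1, h2⟩
    · simp [not_hiSet_subset_loSet, AM_lo_hi, BM_lo_hi]
    · have hfin : n + 1 ≠ finOf n (natSet I) := by
        have := finOf_le n (natSet I)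
        omega
      simp only [loSet_subset_hiSet, card_loSet, finOf_loSet, finOf_hiSet, AM_hi_lo, BM_hi_lo,
        hfin, and_false]
      exact ⟨h1, h2, False.elim, fun _ => trivial⟩
    · simp only [hiSet_subset_hiSet, card_hiSet, finOf_hiSet, AM_hi_hi, BM_hi_hi, pow_succ]
      refine ⟨fun h => ?_, fun h => ?_, fun h => ?_, fun h => ?_⟩
      · have hA := h1 h
        have hB : 0 ≤ (-1) ^ J.card * (Bmat n * Mobmat n) I J := by
          by_cases hf : J ⊆ I ∧ finOf n (natSet J) = finOf n (natSet I)
          · exact (h3 hf).le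
          · simp [h4 hf]
        linarith
      · rw [h2 h, h4 fun hs => h hs.1]
        simp
      · have := h3 h
        linarith
      · rw [h4 h, neg_zero]

/-- The `(I,J)` entry of `BM_n = B_n · M_n` is nonzero iff `J ⊆ I`
and `fin(J) = fin(I)`; in particular `BM_n` is lower triangular in the
anti-lexicographic order. -/
theorem BM_zero_pattern (n : ℕ) :
    (∀ I J : Finset (Fin n),
      (Bmat n * Mobmat n) I J ≠ 0 ↔ J ⊆ I ∧ finOf n (natSet J) = finOf n (natSet I)) ∧
    (∀ I J : Finset (Fin n), ordFin I < ordFin J → (Bmat n * Mobmat n) I J = 0) := by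
  refine ⟨fun I J => ⟨fun h => ?_, fun h h0 => ?_⟩, fun I J h => ?_⟩
  · by_contra hc
    exact h ((signed_pattern n I J).2.2.2 hc)
  · have := (signed_pattern n I J).2.2.1 h
    simp [h0] at this
  · refine (signed_pattern n I J).2.2.2 fun hc => ?_
    have : ordFin J ≤ ordFin I := Finset.sum_le_sum_of_subset hc.1
    omega
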